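/- arXiv:2604.03987 — 4 statements merged into one kernel-verified Lean document; each statement's English description precedes it below -/
import Mathlib

section
/- Let N points be drawn independently and uniformly at random on the unit sphere S^{n-1} ⊂ ℝⁿ. Then the probability that all N points lie in a common closed hemisphere, i.e., that there exists a unit vector w ∈ ℝⁿ with ⟨x_i, w⟩ ≥ 0 for all i ∈ {1,…,N}, equals 2^{-(N-1)} · Σ_{i=0}^{n-1} C(N-1, i). -/
open MeasureTheory ProbabilityTheory Filter
open scoped RealInnerProductSpace

noncomputable section

/-- `μ` is the uniform (rotation-invariant) probability distribution on the sphere of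
radius `r` centered at the origin of `ℝⁿ`. -/
def IsUniformSphere (n : ℕ) (r : ℝ) (μ : Measure (EuclideanSpace ℝ (Fin n))) : Prop :=
  IsProbabilityMeasure μ ∧
  μ (Metric.sphere (0 : EuclideanSpace ℝ (Fin n)) r)ᶜ = 0 ∧
  ∀ T : EuclideanSpace ℝ (Fin n) ≃ₗᵢ[ℝ] EuclideanSpace ℝ (Fin n), μ.map T = μ


/-- A family of vectors is in general position if any subfamily of at most `dim V` vectors is
linearly independent. -/
def GeneralPosition {ι V : Type*} [AddCommGroup V] [Module ℝ V] (v : ι → V) : Prop :=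
  ∀ s : Finset ι, s.card ≤ Module.finrank ℝ V → LinearIndepOn ℝ v s

open Classical in
/-- The sign patterns `ε` for which the open cone `{w | ∀ i, 0 < ε i * f i w}` is nonempty. -/
def realizableSigns {ι V : Type*} [Fintype ι] [AddCommGroup V] [Module ℝ V]
    (f : ι → Module.Dual ℝ V) : Finset (ι → ℤˣ) :=
  {ε | ∃ w, ∀ i, 0 < ((ε i : ℤ) : ℝ) * f i w}

section LinearAlgebra

variable {ι V : Type*} [AddCommGroup V] [Module ℝ V]

lemma mem_realizableSigns [Fintype ι] {f : ι → Module.Dual ℝ V} {ε : ι → ℤˣ} :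
    ε ∈ realizableSigns f ↔ ∃ w, ∀ i, 0 < ((ε i : ℤ) : ℝ) * f i w := by
  simp [realizableSigns]

/-- Strict linear inequalities survive a small perturbation, and inequalities that are tight at `w`
become strict when the perturbation points in the right direction. -/
lemma exists_pos_perturbation [Finite ι] (a : ι → Module.Dual ℝ V) (w v : V)
    (h : ∀ i, 0 < a i w ∨ (a i w = 0 ∧ 0 < a i v)) :
    ∃ δ : ℝ, 0 < δ ∧ ∀ i, 0 < a i (w + δ • v) := by
  have key : ∀ᶠ δ : ℝ in nhdsWithin 0 (Set.Ioi 0), ∀ i, 0 < a i (w + δ • v) := by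
    rw [eventually_all]
    intro i
    rcases h i with hi | ⟨hi, hv⟩
    · have hc : ContinuousAt (fun δ : ℝ => a i w + δ * a i v) 0 := by fun_prop
      have := hc.eventually (lt_mem_nhds (show (0 : ℝ) < a i w + 0 * a i v by simpa using hi))
      filter_upwards [nhdsWithin_le_nhds this] with δ hδ
      simpa using hδ
    · filter_upwards [self_mem_nhdsWithin] with δ hδ
      simpa [hi] using mul_pos hδ hv
  obtain ⟨δ, h1, h2⟩ := (key.and self_mem_nhdsWithin).exists
  exact ⟨δ, h2, h1⟩

lemma exists_dual_apply_eq [FiniteDimensional ℝ V] {f : ι → Module.Dual ℝ V} {s : Finset ι}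
    (hf : LinearIndepOn ℝ f (s : Set ι)) (c : ι → ℝ) : ∃ v, ∀ i ∈ s, f i v = c i := by
  classical
  let T := Fintype.linearCombination ℝ fun i : s => f i
  have hT : Function.Injective T := by
    have h : LinearIndependent ℝ (fun i : s => f i) := hf
    rwa [linearIndependent_iff_injective_fintypeLinearCombination] at h
  obtain ⟨φ, hφ⟩ := LinearMap.dualMap_surjective_of_injective hT
    (Fintype.linearCombination ℝ fun i : s => c i)
  refine ⟨(Module.evalEquiv ℝ V).symm φ, fun i hi => ?_⟩
  have h := LinearMap.congr_fun hφ (Pi.single ⟨i, hi⟩ 1)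
  simpa [T, LinearMap.dualMap_apply] using h

lemma GeneralPosition.exists_pos_of_nonneg [Fintype ι] [FiniteDimensional ℝ V]
    {f : ι → Module.Dual ℝ V} (hf : GeneralPosition f) {w : V} (hw : w ≠ 0)
    (h : ∀ i, 0 ≤ f i w) : ∃ w', ∀ i, 0 < f i w' := by
  classical
  let Z : Finset ι := {i | f i w = 0}
  have hZ : Z.card ≤ Module.finrank ℝ (Module.Dual ℝ V) := by
    by_contra! hlt
    obtain ⟨s, hs, hcard⟩ := Finset.exists_subset_card_eq hlt.le
    have hli : LinearIndependent ℝ (fun i : s => f i) := hf s hcard.le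
    have hspan : Submodule.span ℝ (Set.range fun i : s => f i) = ⊤ :=
      hli.span_eq_top_of_card_eq_finrank' (by simpa using hcard)
    have hle : Submodule.span ℝ (Set.range fun i : s => f i) ≤
        LinearMap.ker (Module.Dual.eval ℝ V w) := by
      rw [Submodule.span_le]
      rintro _ ⟨i, rfl⟩
      have := hs i.2
      simpa [Z] using this
    rw [hspan] at hle
    refine hw ((Module.forall_dual_apply_eq_zero_iff ℝ w).1 fun φ => ?_)
    simpa using hle (Submodule.mem_top (x := φ))
  obtain ⟨v, hv⟩ := exists_dual_apply_eq (hf Z hZ) 1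
  obtain ⟨δ, -, hδ⟩ := exists_pos_perturbation f w v fun i => by
    rcases (h i).eq_or_lt with hi | hi
    · exact .inr ⟨hi.symm, by simp [hv i (by simp [Z, hi.symm])]⟩
    · exact .inl hi
  exact ⟨_, hδ⟩

lemma GeneralPosition.tail {N : ℕ} {v : Fin (N + 1) → V} (hv : GeneralPosition v) :
    GeneralPosition (Fin.tail v) := by
  intro s hs
  have := hv (s.map (Fin.succEmb N)) (by simpa using hs)
  exact LinearIndepOn.comp_of_image (f := Fin.succ) (v := v) (by simpa using this)
    (Fin.succ_injective N).injOn

lemma GeneralPosition.notMem_span_tail {N : ℕ} {v : Fin (N + 1) → V} (hv : GeneralPosition v)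
    {s : Finset (Fin N)} (hs : s.card < Module.finrank ℝ V) :
    v 0 ∉ Submodule.span ℝ (Fin.tail v '' (s : Set (Fin N))) := by
  have h := hv (insert 0 (s.map (Fin.succEmb N))) (by
    rw [Finset.card_insert_of_notMem (by simp)]
    simpa using hs)
  rw [Finset.coe_insert, linearIndepOn_insert (by simp)] at h
  simpa [Set.image_image, Fin.tail_def] using h.2

lemma GeneralPosition.cons {N : ℕ} {v : Fin N → V} (hv : GeneralPosition v) {y : V}
    (hy : ∀ s : Finset (Fin N), s.card < Module.finrank ℝ V →
      y ∉ Submodule.span ℝ (v '' (s : Set (Fin N)))) :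
    GeneralPosition (Fin.cons y v : Fin (N + 1) → V) := by
  classical
  intro s hs
  let t : Finset (Fin N) := {i | i.succ ∈ s}
  have himage (ht : t.card ≤ Module.finrank ℝ V) :
      LinearIndepOn ℝ (Fin.cons y v : Fin (N + 1) → V) (Fin.succ '' (t : Set (Fin N))) :=
    LinearIndepOn.image_of_comp Fin.succ _ (by simpa [Function.comp_def] using hv t ht)
  by_cases h0 : 0 ∈ s
  · have hst : s = insert 0 (t.map (Fin.succEmb N)) := by
      ext i
      cases i using Fin.cases <;> simp [t, h0]
    rw [hst, Finset.card_insert_of_notMem (by simp), Finset.card_map] at hs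
    rw [hst, Finset.coe_insert, linearIndepOn_insert (by simp)]
    refine ⟨by simpa using himage (by omega), ?_⟩
    simpa [Set.image_image] using hy t hs
  · have hst : s = t.map (Fin.succEmb N) := by
      ext i
      cases i using Fin.cases <;> simp [t, h0]
    rw [hst, Finset.card_map] at hs
    rw [hst]
    simpa using himage hs

lemma GeneralPosition.restrict_ker [FiniteDimensional ℝ V] {N : ℕ}
    {f : Fin (N + 1) → Module.Dual ℝ V} (hf : GeneralPosition f) (h0 : f 0 ≠ 0) :
    GeneralPosition fun i : Fin N => (LinearMap.ker (f 0)).dualRestrict (f i.succ) := by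
  intro s hs
  rw [Subspace.dual_finrank_eq] at hs
  have hd := Module.Dual.finrank_ker_add_one_of_ne_zero h0
  have hli := hf.tail s (by rw [Subspace.dual_finrank_eq]; omega)
  have hnm := hf.notMem_span_tail (s := s) (by rw [Subspace.dual_finrank_eq]; omega)
  refine LinearIndependent.map (v := fun i : s => Fin.tail f i) hli ?_
  have hker : LinearMap.ker (LinearMap.ker (f 0)).dualRestrict ≤ Submodule.span ℝ {f 0} := by
    intro g hg
    have := mem_span_of_iInf_ker_le_ker (L := fun _ : Unit => f 0) (K := g) (by
      intro x hx
      simp only [ciInf_const] at hx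
      exact LinearMap.congr_fun hg ⟨x, hx⟩)
    simpa using this
  refine Disjoint.mono_right hker ?_
  rw [Submodule.disjoint_span_singleton' h0]
  rw [Set.image_eq_range] at hnm
  exact hnm

/-- The deletion-restriction recursion for the cones cut out by a central arrangement. -/
lemma card_realizableSigns_succ {N : ℕ} {f : Fin (N + 1) → Module.Dual ℝ V} (h0 : f 0 ≠ 0) :
    (realizableSigns f).card = (realizableSigns (Fin.tail f)).card +
      (realizableSigns fun i : Fin N => (LinearMap.ker (f 0)).dualRestrict (f i.succ)).card := by
  classical
  let P (s : ℤˣ) : Finset (Fin N → ℤˣ) := {ε | Fin.cons s ε ∈ realizableSigns f}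
  have hP {s : ℤˣ} {ε : Fin N → ℤˣ} : ε ∈ P s ↔ ∃ w, 0 < ((s : ℤ) : ℝ) * f 0 w ∧
      ∀ i, 0 < ((ε i : ℤ) : ℝ) * Fin.tail f i w := by
    simp [P, mem_realizableSigns, Fin.forall_fin_succ, Fin.tail_def]
  have hcard : (realizableSigns f).card = (P 1).card + (P (-1)).card := by
    have huniv : (realizableSigns f).card = ∑ ε, if ε ∈ realizableSigns f then 1 else 0 := by
      simp
    rw [huniv, ← (Fin.consEquiv fun _ => ℤˣ).sum_comp, Fintype.sum_prod_type, UnitsInt.univ,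
      Finset.sum_pair (by decide)]
    simp only [P, Finset.card_filter]
    rfl
  rw [hcard, ← Finset.card_union_add_card_inter]
  congr 2
  · ext ε
    rw [Finset.mem_union, hP, hP, mem_realizableSigns]
    constructor
    · rintro (⟨w, -, hw⟩ | ⟨w, -, hw⟩) <;> exact ⟨w, hw⟩
    · rintro ⟨w, hw⟩
      have hne : ∃ w, f 0 w ≠ 0 ∧ ∀ i, 0 < ((ε i : ℤ) : ℝ) * Fin.tail f i w := by
        by_cases hw0 : f 0 w = 0
        · obtain ⟨v, hv⟩ := DFunLike.ne_iff.1 h0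
          obtain ⟨δ, hδ, h⟩ := exists_pos_perturbation
            (fun i => ((ε i : ℤ) : ℝ) • Fin.tail f i) w v fun i => .inl (by simpa using hw i)
          exact ⟨w + δ • v, by simpa [hw0, hδ.ne'] using hv, by simpa using h⟩
        · exact ⟨w, hw0, hw⟩
      obtain ⟨w, hw0, hw⟩ := hne
      rcases hw0.lt_or_gt with h | h
      · exact .inr ⟨w, by simpa using h, hw⟩
      · exact .inl ⟨w, by simpa using h, hw⟩
  · ext ε
    rw [Finset.mem_inter, hP, hP, mem_realizableSigns]
    constructor
    · rintro ⟨⟨u, hu0, hu⟩, ⟨v, hv0, hv⟩⟩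
      simp only [Units.val_one, Int.cast_one, one_mul, Units.val_neg, Int.cast_neg, neg_mul,
        Left.neg_pos_iff] at hu0 hv0
      refine ⟨⟨(-f 0 v) • u + f 0 u • v, by simp; ring⟩, fun i => ?_⟩
      have h1 := mul_pos (neg_pos.2 hv0) (hu i)
      have h2 := mul_pos hu0 (hv i)
      simp only [Fin.tail_def] at h1 h2
      simp only [Submodule.dualRestrict_apply, map_add, map_smul, smul_eq_mul]
      linarith
    · rintro ⟨⟨w, hw0⟩, hw⟩
      rw [LinearMap.mem_ker] at hw0
      replace hw : ∀ i, 0 < ((ε i : ℤ) : ℝ) * Fin.tail f i w := hw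
      obtain ⟨v, hv⟩ : ∃ v, 0 < f 0 v := by
        obtain ⟨v, hv⟩ := DFunLike.ne_iff.1 h0
        rcases lt_or_gt_of_ne hv with h | h
        · exact ⟨-v, by simpa using h⟩
        · exact ⟨v, h⟩
      constructor
      · obtain ⟨δ, hδ, h⟩ := exists_pos_perturbation
          (fun i => ((ε i : ℤ) : ℝ) • Fin.tail f i) w v fun i => .inl (by simpa using hw i)
        exact ⟨w + δ • v, by simpa [hw0] using mul_pos hδ hv, by simpa using h⟩
      · obtain ⟨δ, hδ, h⟩ := exists_pos_perturbation
          (fun i => ((ε i : ℤ) : ℝ) • Fin.tail f i) w (-v) fun i => .inl (by simpa using hw i)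
        exact ⟨w + δ • -v, by simpa [hw0] using mul_pos hδ hv, by simpa using h⟩

lemma sum_range_choose_succ (N d : ℕ) :
    ∑ i ∈ Finset.range (d + 1), (N + 1).choose i =
      ∑ i ∈ Finset.range (d + 1), N.choose i + ∑ i ∈ Finset.range d, N.choose i := by
  rw [Finset.sum_range_succ', Finset.sum_range_succ' (fun i => N.choose i)]
  simp only [Nat.choose_succ_succ', Finset.sum_add_distrib, Nat.choose_zero_right]
  ring

/-- The number of cones cut out by `N + 1` linear hyperplanes in general position. -/
theorem GeneralPosition.card_realizableSigns (N : ℕ) {V : Type*} [AddCommGroup V] [Module ℝ V]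
    [FiniteDimensional ℝ V] {f : Fin (N + 1) → Module.Dual ℝ V} (hf : GeneralPosition f) :
    (realizableSigns f).card = 2 * ∑ i ∈ Finset.range (Module.finrank ℝ V), N.choose i := by
  rcases Nat.eq_zero_or_pos (Module.finrank ℝ V) with hd | hd
  · have := Module.finrank_zero_iff.1 hd
    rw [hd, Finset.range_zero, Finset.sum_empty, mul_zero, Finset.card_eq_zero,
      Finset.eq_empty_iff_forall_notMem]
    intro ε hε
    obtain ⟨w, hw⟩ := mem_realizableSigns.1 hε
    simpa [Subsingleton.elim w 0] using hw 0
  have h0 : f 0 ≠ 0 := by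
    have := hf {0} (by rw [Subspace.dual_finrank_eq]; simpa using Nat.succ_le_of_lt hd)
    simpa using this
  have hker := Module.Dual.finrank_ker_add_one_of_ne_zero h0
  rw [card_realizableSigns_succ h0]
  cases N with
  | zero =>
    rw [← hker, Finset.sum_range_succ']
    simp [realizableSigns]
  | succ N =>
    rw [hf.tail.card_realizableSigns, (hf.restrict_ker h0).card_realizableSigns, ← hker,
      sum_range_choose_succ, mul_add]
termination_by N

end LinearAlgebra

section UniformSphere

variable {n : ℕ} {μ : Measure (EuclideanSpace ℝ (Fin n))}

lemma IsUniformSphere.ae_inner_ne_zero (hμ : IsUniformSphere n 1 μ)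
    {w : EuclideanSpace ℝ (Fin n)} (hw : w ≠ 0) : ∀ᵐ x ∂μ, ⟪x, w⟫ ≠ 0 := by
  obtain ⟨hprob, hsphere, hinv⟩ := hμ
  have hx0 : ∀ᵐ x ∂μ, x ≠ 0 := by
    filter_upwards [compl_mem_ae_iff.2 hsphere] with x hx h0
    simp [h0] at hx
  have hvol : ∀ᵐ x ∂μ, ∀ᵐ v : EuclideanSpace ℝ (Fin n), ⟪x, v⟫ ≠ 0 := by
    filter_upwards [hx0] with x hx
    have h := Measure.addHaar_submodule (volume : Measure (EuclideanSpace ℝ (Fin n)))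
      (LinearMap.ker (innerₛₗ ℝ x)) fun h => hx (by
        have : x ∈ LinearMap.ker (innerₛₗ ℝ x) := h ▸ Submodule.mem_top
        simpa using this)
    rw [ae_iff]
    convert h using 2
    ext v
    simp
  rw [Measure.ae_ae_comm (by measurability)] at hvol
  obtain ⟨v, hv⟩ := hvol.exists
  have hv0 : v ≠ 0 := by
    rintro rfl
    simp [IsProbabilityMeasure.ne_zero μ] at hv
  let T := (ℝ ∙ (‖v‖ • w - ‖w‖ • v))ᗮ.reflection
  have hT : T (‖v‖ • w) = ‖w‖ • v :=
    Submodule.reflection_sub (by simp [norm_smul, mul_comm])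
  rw [← hinv T, ae_map_iff T.continuous.aemeasurable (by measurability)] at hv
  filter_upwards [hv] with x hx h
  have h1 : ⟪T x, T (‖v‖ • w)⟫ = 0 := by
    rw [T.inner_map_map, real_inner_smul_right, h, mul_zero]
  rw [hT, real_inner_smul_right] at h1
  exact hx ((mul_eq_zero.1 h1).resolve_left (norm_ne_zero_iff.2 hw))

lemma IsUniformSphere.ae_notMem (hμ : IsUniformSphere n 1 μ)
    {p : Submodule ℝ (EuclideanSpace ℝ (Fin n))} (hp : p ≠ ⊤) : ∀ᵐ x ∂μ, x ∉ p := by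
  obtain ⟨w, hw, hw0⟩ := Submodule.exists_mem_ne_zero_of_ne_bot
    (mt Submodule.orthogonal_eq_bot_iff.1 hp)
  filter_upwards [hμ.ae_inner_ne_zero hw0] with x hx hxp
  exact hx (hw x hxp)

lemma measurableSet_generalPosition {ι : Type*} [Finite ι] :
    MeasurableSet {x : ι → EuclideanSpace ℝ (Fin n) | GeneralPosition x} := by
  simp only [GeneralPosition, Set.ofPred_forall]
  refine MeasurableSet.iInter fun s => MeasurableSet.iInter fun _ => ?_
  exact (isOpen_setOfPred_linearIndependent.preimage
    (f := fun (x : ι → EuclideanSpace ℝ (Fin n)) (i : s) => x i) (by fun_prop)).measurableSet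

lemma IsUniformSphere.ae_generalPosition (hμ : IsUniformSphere n 1 μ) (N : ℕ) :
    ∀ᵐ x ∂(Measure.pi fun _ : Fin N => μ), GeneralPosition x := by
  have := hμ.1
  induction N with
  | zero =>
    refine Eventually.of_forall fun x s _ => ?_
    rw [Finset.eq_empty_of_isEmpty s, Finset.coe_empty]
    exact linearIndepOn_empty ℝ x
  | succ N ih =>
    have hmp := (measurePreserving_piFinSuccAbove (fun _ : Fin (N + 1) => μ) 0).symm
    have hmeas : MeasurableSet {z : EuclideanSpace ℝ (Fin n) × (Fin N → EuclideanSpace ℝ (Fin n)) |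
        GeneralPosition (Fin.cons z.1 z.2 : Fin (N + 1) → EuclideanSpace ℝ (Fin n))} := by
      simpa [MeasurableEquiv.piFinSuccAbove, Fin.consEquiv] using
        hmp.measurable measurableSet_generalPosition
    have hae : ∀ᵐ z ∂μ.prod (Measure.pi fun _ : Fin N => μ),
        GeneralPosition (Fin.cons z.1 z.2 : Fin (N + 1) → EuclideanSpace ℝ (Fin n)) := by
      rw [Measure.ae_prod_iff_ae_ae hmeas, Measure.ae_ae_comm hmeas]
      filter_upwards [ih] with x hx
      have hspan : ∀ᵐ y ∂μ, ∀ s : Finset (Fin N), s.card < n →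
          y ∉ Submodule.span ℝ (x '' (s : Set (Fin N))) := by
        rw [ae_all_iff]
        intro s
        rw [eventually_imp_distrib_left]
        intro hs
        refine hμ.ae_notMem fun h => ?_
        classical
        have hcard := finrank_span_finset_le_card (R := ℝ) (s.image x)
        rw [Finset.coe_image, Set.finrank, h, finrank_top, finrank_euclideanSpace_fin] at hcard
        exact absurd (hcard.trans Finset.card_image_le) hs.not_ge
      filter_upwards [hspan] with y hy
      exact hx.cons (by simpa using hy)
    rw [← hmp.map_eq, ae_map_iff hmp.measurable.aemeasurable measurableSet_generalPosition]
    simpa [MeasurableEquiv.piFinSuccAbove, Fin.consEquiv] using hae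

lemma GeneralPosition.innerₛₗ {ι : Type*} {x : ι → EuclideanSpace ℝ (Fin n)}
    (hx : GeneralPosition x) : GeneralPosition fun i => innerₛₗ ℝ (x i) := by
  intro s hs
  rw [Subspace.dual_finrank_eq] at hs
  refine (hx s hs).map_injOn (_root_.innerₛₗ ℝ) ?_
  refine Function.Injective.injOn fun a b hab => ?_
  exact ext_inner_right ℝ fun v => LinearMap.congr_fun hab v

lemma IsUniformSphere.measurePreserving_units_smul (hμ : IsUniformSphere n 1 μ) (s : ℤˣ) :
    MeasurePreserving (fun x => ((s : ℤ) : ℝ) • x) μ μ := by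
  rcases Int.units_eq_one_or s with rfl | rfl
  · simpa [Function.id_def] using MeasurePreserving.id μ
  · refine ⟨by fun_prop, ?_⟩
    simpa [Function.comp_def] using hμ.2.2 (LinearIsometryEquiv.neg ℝ)

/-- The probability that the points lie in a common open half-space, times the number of
sign patterns, is the number of realizable sign patterns of a generic configuration. -/
lemma IsUniformSphere.two_pow_mul_measure_halfSpace (hμ : IsUniformSphere n 1 μ) (N : ℕ) :
    2 ^ (N + 1) * (Measure.pi fun _ : Fin (N + 1) => μ)
      {x | ∃ w, ∀ i, 0 < ⟪x i, w⟫} =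
    ((2 * ∑ i ∈ Finset.range n, N.choose i : ℕ) : ENNReal) := by
  classical
  have := hμ.1
  set P := Measure.pi fun _ : Fin (N + 1) => μ
  let O : Set (Fin (N + 1) → EuclideanSpace ℝ (Fin n)) := {x | ∃ w, ∀ i, 0 < ⟪x i, w⟫}
  let φ (ε : Fin (N + 1) → ℤˣ) (x : Fin (N + 1) → EuclideanSpace ℝ (Fin n)) :
      Fin (N + 1) → EuclideanSpace ℝ (Fin n) := fun i => ((ε i : ℤ) : ℝ) • x i
  have hφ (ε) : MeasurePreserving (φ ε) P P :=
    measurePreserving_pi _ _ fun i => hμ.measurePreserving_units_smul (ε i)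
  have hO : MeasurableSet O := by
    refine IsOpen.measurableSet ?_
    simp only [O, Set.ofPred_exists, Set.ofPred_forall]
    exact isOpen_iUnion fun w => isOpen_iInter_of_finite fun i =>
      isOpen_lt continuous_const (by fun_prop)
  calc 2 ^ (N + 1) * P O = ∑ ε : Fin (N + 1) → ℤˣ, P (φ ε ⁻¹' O) := by
        simp [(hφ _).measure_preimage hO.nullMeasurableSet]
    _ = ∑ ε : Fin (N + 1) → ℤˣ, ∫⁻ x, (φ ε ⁻¹' O).indicator 1 x ∂P := by
        simp [lintegral_indicator_one ((hφ _).measurable hO)]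
    _ = ∫⁻ x, ∑ ε : Fin (N + 1) → ℤˣ, (φ ε ⁻¹' O).indicator 1 x ∂P :=
        (lintegral_finsetSum _ fun ε _ =>
          measurable_one.indicator ((hφ ε).measurable hO)).symm
    _ = ∫⁻ _, ((2 * ∑ i ∈ Finset.range n, N.choose i : ℕ) : ENNReal) ∂P := by
        refine lintegral_congr_ae ?_
        filter_upwards [hμ.ae_generalPosition (N + 1)] with x hx
        have hcard := hx.innerₛₗ.card_realizableSigns
        rw [finrank_euclideanSpace_fin] at hcard
        rw [← hcard, ← Finset.filter_univ_mem (realizableSigns _), Finset.natCast_card_filter]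
        refine Finset.sum_congr rfl fun ε _ => ?_
        simp [Set.indicator_apply, mem_realizableSigns, φ, O, real_inner_smul_left]
    _ = _ := by simp

end UniformSphere

/-- **Wendel's theorem.** If `N` points are drawn i.i.d. uniformly at random on the unit
sphere `S^{n-1} ⊂ ℝⁿ`, the probability that all of them lie in a common closed hemisphere
(i.e. there is a unit vector `w` with `⟨x i, w⟩ ≥ 0` for all `i`) equals
`2^{-(N-1)} ∑_{i=0}^{n-1} C(N-1, i)`. -/
theorem wendel (n N : ℕ) (hn : 1 ≤ n) (hN : 1 ≤ N)
    (μ : Measure (EuclideanSpace ℝ (Fin n))) (hμ : IsUniformSphere n 1 μ) :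
    (Measure.pi fun _ : Fin N => μ)
      {x : Fin N → EuclideanSpace ℝ (Fin n) |
        ∃ w : EuclideanSpace ℝ (Fin n), ‖w‖ = 1 ∧ ∀ i : Fin N, 0 ≤ ⟪x i, w⟫} =
    ENNReal.ofReal ((∑ i ∈ Finset.range n, ((N - 1).choose i : ℝ)) / 2 ^ (N - 1)) := by
  obtain ⟨N, rfl⟩ : ∃ M, N = M + 1 := ⟨N - 1, by omega⟩
  have hcongr : {x : Fin (N + 1) → EuclideanSpace ℝ (Fin n) |
        ∃ w : EuclideanSpace ℝ (Fin n), ‖w‖ = 1 ∧ ∀ i, 0 ≤ ⟪x i, w⟫}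
      =ᵐ[Measure.pi fun _ => μ] {x | ∃ w, ∀ i, 0 < ⟪x i, w⟫} := by
    filter_upwards [hμ.ae_generalPosition (N + 1)] with x hx
    refine propext ⟨?_, ?_⟩
    · rintro ⟨w, hw, h⟩
      exact hx.innerₛₗ.exists_pos_of_nonneg (norm_ne_zero_iff.1 (hw ▸ one_ne_zero)) h
    · rintro ⟨w, h⟩
      have hw : w ≠ 0 := by
        rintro rfl
        simpa using h 0
      refine ⟨‖w‖⁻¹ • w, norm_smul_inv_norm hw, fun i => ?_⟩
      rw [real_inner_smul_right]
      exact mul_nonneg (by positivity) (h i).le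
  rw [measure_congr hcongr, Nat.add_sub_cancel]
  have h := hμ.two_pow_mul_measure_halfSpace N
  rw [pow_succ', mul_assoc, Nat.cast_mul, Nat.cast_ofNat,
    ENNReal.mul_right_inj (by simp) (by simp)] at h
  rw [ENNReal.ofReal_div_of_pos (by positivity), ENNReal.eq_div_iff (by simp) (by simp)]
  rw [ENNReal.ofReal_pow (by simp), ENNReal.ofReal_ofNat, h, ← Nat.cast_sum,
    ENNReal.ofReal_natCast]
end
end

section
/- Fix β with 1 < β < 2 and set K_a(n) = ⌊βn⌋ and p_n = 2^{-(K_a(n)-1)} · Σ_{i=0}^{n-1} C(K_a(n)-1, i). Then lim_{n→∞} -(1/n) · log(1 - p_n) = β · D(1/β ‖ 1/2) > 0, where D(x ‖ 1/2) = x·log(2x) + (1-x)·log(2(1-x)). In particular, p_n → 1 exponentially fast as n → ∞. -/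
open Filter
open scoped Topology

noncomputable section

/-- `pWendel β n` is the probability (by Wendel's theorem) that `K_a(n) = ⌊βn⌋` points drawn
i.i.d. uniformly on the unit sphere `S^{n-1} ⊂ ℝⁿ` all lie in a common closed hemisphere:
`p_n = 2^{-(K_a(n)-1)} ∑_{i=0}^{n-1} C(K_a(n)-1, i)`. -/
def pWendel (β : ℝ) (n : ℕ) : ℝ :=
  (∑ i ∈ Finset.range n, ((⌊β * n⌋₊ - 1).choose i : ℝ)) / 2 ^ (⌊β * n⌋₊ - 1)

/-- The binary relative entropy `D(x ‖ 1/2) = x log(2x) + (1-x) log(2(1-x))`. -/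
def Dhalf (x : ℝ) : ℝ := x * Real.log (2 * x) + (1 - x) * Real.log (2 * (1 - x))

/-- Stirling's formula at logarithmic scale: `log (n!) / n = log n - 1 + o(1)`. -/
theorem tendsto_log_factorial_div_sub_log :
    Tendsto (fun n : ℕ => Real.log (n.factorial : ℝ) / n - Real.log n) atTop (𝓝 (-1)) := by
  have hpi : (√Real.pi : ℝ) ≠ 0 := by positivity
  have hstirling : Tendsto (fun n : ℕ => Real.log (Stirling.stirlingSeq n) / n) atTop (𝓝 0) :=
    (Stirling.tendsto_stirlingSeq_sqrt_pi.log hpi).div_atTop tendsto_natCast_atTop_atTop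
  have hlog : Tendsto (fun n : ℕ => Real.log (n : ℝ) / n) atTop (𝓝 0) :=
    Real.isLittleO_log_id_atTop.tendsto_div_nhds_zero.comp tendsto_natCast_atTop_atTop
  have hconst : Tendsto (fun n : ℕ => Real.log 2 / (n : ℝ)) atTop (𝓝 0) :=
    tendsto_const_div_atTop_nhds_zero_nat _
  have hsum := ((hstirling.add ((hconst.add hlog).const_mul (1 / 2))).add_const (-1))
  rw [show (0 + 1 / 2 * (0 + 0) + -1 : ℝ) = -1 by norm_num] at hsum
  refine hsum.congr' ?_
  filter_upwards [eventually_gt_atTop 0] with n hn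
  have hn' : (n : ℝ) ≠ 0 := by positivity
  rw [Stirling.log_stirlingSeq_formula, Real.log_mul two_ne_zero hn',
    Real.log_div hn' (Real.exp_ne_zero 1), Real.log_exp]
  field_simp
  ring

/-- A sequence of naturals growing linearly tends to infinity. -/
theorem tendsto_atTop_of_tendsto_div {N : ℕ → ℕ} {b : ℝ} (hb : 0 < b)
    (hN : Tendsto (fun n => (N n : ℝ) / n) atTop (𝓝 b)) : Tendsto N atTop atTop := by
  refine tendsto_natCast_atTop_iff (R := ℝ) |>.1 ?_
  refine (hN.pos_mul_atTop hb (tendsto_natCast_atTop_atTop (R := ℝ))).congr' ?_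
  filter_upwards [eventually_gt_atTop 0] with n hn
  field_simp

/-- Linear growth rate of `log (N n)!`, after removing the leading `N n * log n`. -/
theorem tendsto_log_factorial_comp {N : ℕ → ℕ} {b : ℝ} (hb : 0 < b)
    (hN : Tendsto (fun n => (N n : ℝ) / n) atTop (𝓝 b)) :
    Tendsto (fun n => Real.log ((N n).factorial : ℝ) / n - (N n : ℝ) / n * Real.log n) atTop
      (𝓝 (b * Real.log b - b)) := by
  have hNtop := tendsto_atTop_of_tendsto_div hb hN
  have hlim := hN.mul ((tendsto_log_factorial_div_sub_log.comp hNtop).add (hN.log hb.ne'))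
  rw [show b * (-1 + Real.log b) = b * Real.log b - b by ring] at hlim
  refine hlim.congr' ?_
  filter_upwards [eventually_gt_atTop 0, hNtop.eventually_gt_atTop 0] with n hn hNn
  have hn' : (n : ℝ) ≠ 0 := by positivity
  have hNn' : (N n : ℝ) ≠ 0 := by positivity
  simp only [Function.comp_apply]
  rw [Real.log_div hNn' hn']
  field_simp
  ring

/-- Exponential growth rate of `(N n).choose n` when `N n / n → b > 1`. -/
theorem tendsto_log_choose_div {N : ℕ → ℕ} {b : ℝ} (hb : 1 < b)
    (hN : Tendsto (fun n => (N n : ℝ) / n) atTop (𝓝 b)) (hle : ∀ᶠ n in atTop, n ≤ N n) :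
    Tendsto (fun n => Real.log ((N n).choose n : ℝ) / n) atTop
      (𝓝 (b * Real.log b - (b - 1) * Real.log (b - 1))) := by
  have hM : Tendsto (fun n => ((N n - n : ℕ) : ℝ) / n) atTop (𝓝 (b - 1)) := by
    refine (hN.sub_const 1).congr' ?_
    filter_upwards [eventually_gt_atTop 0, hle] with n hn hn'
    rw [Nat.cast_sub hn']
    field_simp
  have hlim := ((tendsto_log_factorial_comp (by linarith) hN).sub
    tendsto_log_factorial_div_sub_log).sub (tendsto_log_factorial_comp (sub_pos.2 hb) hM)
  rw [show b * Real.log b - b - -1 - ((b - 1) * Real.log (b - 1) - (b - 1)) =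
    b * Real.log b - (b - 1) * Real.log (b - 1) by ring] at hlim
  refine hlim.congr' ?_
  filter_upwards [eventually_gt_atTop 0, hle] with n hn hn'
  rw [Nat.cast_choose ℝ hn', Real.log_div (by positivity) (by positivity),
    Real.log_mul (by positivity) (by positivity), Nat.cast_sub hn']
  field_simp
  ring

/-- Chernoff bound for the upper tail of a row of Pascal's triangle. -/
theorem sum_Ico_choose_le {t : ℝ} (ht : 1 ≤ t) (n N : ℕ) :
    ∑ i ∈ Finset.Ico n (N + 1), (N.choose i : ℝ) ≤ (1 + t) ^ N / t ^ n := by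
  have ht0 : 0 < t := by linarith
  rw [le_div_iff₀ (by positivity), add_comm 1 t, add_pow, Finset.sum_mul]
  calc ∑ i ∈ Finset.Ico n (N + 1), (N.choose i : ℝ) * t ^ n
      ≤ ∑ i ∈ Finset.Ico n (N + 1), t ^ i * 1 ^ (N - i) * (N.choose i : ℝ) := by
        refine Finset.sum_le_sum fun i hi => ?_
        rw [one_pow, mul_one, mul_comm]
        gcongr
        exact (Finset.mem_Ico.1 hi).1
    _ ≤ ∑ i ∈ Finset.range (N + 1), t ^ i * 1 ^ (N - i) * (N.choose i : ℝ) := by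
        refine Finset.sum_le_sum_of_subset_of_nonneg ?_ fun i _ _ => by positivity
        intro i hi
        exact Finset.mem_range.2 (Finset.mem_Ico.1 hi).2

/-- The complement of the hemisphere probability is an upper binomial tail. -/
theorem one_sub_pWendel {β : ℝ} {n : ℕ} (h : n ≤ ⌊β * n⌋₊ - 1) :
    1 - pWendel β n = (∑ i ∈ Finset.Ico n (⌊β * n⌋₊ - 1 + 1), ((⌊β * n⌋₊ - 1).choose i : ℝ)) /
      2 ^ (⌊β * n⌋₊ - 1) := by
  have hrow : ∑ i ∈ Finset.range (⌊β * n⌋₊ - 1 + 1), ((⌊β * n⌋₊ - 1).choose i : ℝ) =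
      2 ^ (⌊β * n⌋₊ - 1) := by
    exact_mod_cast Nat.sum_range_choose _
  rw [pWendel, Finset.sum_Ico_eq_sub _ (by omega), hrow, sub_div, div_self (by positivity)]

theorem mul_Dhalf_one_div {β : ℝ} (hβ : 1 < β) :
    β * Dhalf (1 / β) = β * Real.log 2 - (β * Real.log β - (β - 1) * Real.log (β - 1)) := by
  have h0 : β ≠ 0 := by linarith
  have h1 : β - 1 ≠ 0 := by linarith
  rw [Dhalf, show 2 * (1 / β) = 2 / β by ring,
    show 2 * (1 - 1 / β) = 2 * (β - 1) / β by field_simp, Real.log_div two_ne_zero h0,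
    Real.log_div (by positivity) h0, Real.log_mul two_ne_zero h1]
  field_simp
  ring

theorem Dhalf_eq_log_two_sub_binEntropy {x : ℝ} (h0 : 0 < x) (h1 : x < 1) :
    Dhalf x = Real.log 2 - Real.binEntropy x := by
  have h1' : 1 - x ≠ 0 := by linarith
  rw [Dhalf, Real.binEntropy, Real.log_mul two_ne_zero h0.ne', Real.log_mul two_ne_zero h1',
    Real.log_inv, Real.log_inv]
  ring

theorem tendsto_floor_mul_sub_one_div {β : ℝ} (hβ : 1 < β) :
    Tendsto (fun n : ℕ => ((⌊β * n⌋₊ - 1 : ℕ) : ℝ) / n) atTop (𝓝 β) := by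
  have hfloor : Tendsto (fun n : ℕ => (⌊β * n⌋₊ : ℝ) / n) atTop (𝓝 β) :=
    (tendsto_nat_floor_mul_div_atTop (by linarith : 0 ≤ β)).comp
      (tendsto_natCast_atTop_atTop (R := ℝ))
  have hlim := hfloor.sub (tendsto_const_div_atTop_nhds_zero_nat (1 : ℝ))
  rw [sub_zero] at hlim
  refine hlim.congr' ?_
  filter_upwards [eventually_gt_atTop 0] with n hn
  have hn1 : (1 : ℝ) ≤ n := by exact_mod_cast hn
  have hpos : 1 ≤ ⌊β * n⌋₊ := Nat.le_floor (by push_cast; nlinarith)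
  rw [Nat.cast_sub hpos, sub_div, Nat.cast_one]

/-- For `1 < β < 2`, the hemisphere probability `p_n` converges to `1` exponentially fast:
`-(1/n) log(1 - p_n) → β D(1/β ‖ 1/2) > 0`. -/
theorem stmt1 (β : ℝ) (hβ₁ : 1 < β) (hβ₂ : β < 2) :
    Tendsto (fun n : ℕ => -(1 / (n : ℝ)) * Real.log (1 - pWendel β n)) atTop
      (𝓝 (β * Dhalf (1 / β))) ∧ 0 < β * Dhalf (1 / β) := by
  have hβ0 : 0 < β := by linarith
  have hγ : 0 < β - 1 := sub_pos.2 hβ₁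
  refine ⟨?_, ?_⟩
  · rw [mul_Dhalf_one_div hβ₁]
    have hN := tendsto_floor_mul_sub_one_div hβ₁
    have hle : ∀ᶠ n : ℕ in atTop, n ≤ ⌊β * n⌋₊ - 1 := by
      filter_upwards [hN.eventually_const_lt hβ₁, eventually_gt_atTop 0] with n h hn
      rw [lt_div_iff₀ (by positivity), one_mul] at h
      exact_mod_cast h.le
    -- the optimal Chernoff parameter
    set t : ℝ := 1 / (β - 1) with ht
    have ht1 : 1 ≤ t := by
      rw [ht, le_div_iff₀ hγ]
      linarith
    have ht0 : 0 < t := by positivity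
    have hlower : Tendsto (fun n : ℕ => ((⌊β * n⌋₊ - 1 : ℕ) : ℝ) / n *
        (Real.log 2 - Real.log (1 + t)) + Real.log t) atTop
        (𝓝 (β * Real.log 2 - (β * Real.log β - (β - 1) * Real.log (β - 1)))) := by
      convert (hN.mul_const (Real.log 2 - Real.log (1 + t))).add_const (Real.log t) using 2
      rw [show 1 + t = β / (β - 1) by rw [ht]; field_simp; ring, Real.log_div hβ0.ne' hγ.ne',
        ht, one_div, Real.log_inv]
      ring
    have hupper := (hN.mul_const (Real.log 2)).sub (tendsto_log_choose_div hβ₁ hN hle)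
    refine tendsto_of_tendsto_of_tendsto_of_le_of_le' hlower hupper ?_ ?_
    · filter_upwards [hle, eventually_gt_atTop 0] with n hn hn0
      rw [one_sub_pWendel hn]
      set N := ⌊β * n⌋₊ - 1
      have hn0' : (0 : ℝ) < n := by exact_mod_cast hn0
      have hpos : (0 : ℝ) < ∑ i ∈ Finset.Ico n (N + 1), (N.choose i : ℝ) :=
        Finset.sum_pos (fun i hi => by
          exact_mod_cast Nat.choose_pos (Nat.lt_succ_iff.1 (Finset.mem_Ico.1 hi).2))
          ⟨n, Finset.mem_Ico.2 ⟨le_rfl, by omega⟩⟩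
      have hlog := Real.log_le_log hpos (sum_Ico_choose_le ht1 n N)
      rw [Real.log_div (by positivity) (by positivity), Real.log_pow, Real.log_pow] at hlog
      rw [Real.log_div hpos.ne' (by positivity), Real.log_pow]
      field_simp
      linarith
    · filter_upwards [hle, eventually_gt_atTop 0] with n hn hn0
      rw [one_sub_pWendel hn]
      set N := ⌊β * n⌋₊ - 1
      have hn0' : (0 : ℝ) < n := by exact_mod_cast hn0
      have hchoose : (0 : ℝ) < N.choose n := by exact_mod_cast Nat.choose_pos hn
      have hterm : (N.choose n : ℝ) ≤ ∑ i ∈ Finset.Ico n (N + 1), (N.choose i : ℝ) :=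
        Finset.single_le_sum (f := fun i => (N.choose i : ℝ)) (fun i _ => by positivity)
          (Finset.mem_Ico.2 ⟨le_rfl, by omega⟩)
      have hlog := Real.log_le_log hchoose hterm
      rw [Real.log_div (hchoose.trans_le hterm).ne' (by positivity), Real.log_pow]
      field_simp
      linarith
  · rw [Dhalf_eq_log_two_sub_binEntropy (by positivity) ((div_lt_one hβ0).2 hβ₁)]
    refine mul_pos hβ0 (sub_pos.2 (Real.binEntropy_lt_log_two.2 ?_))
    rw [one_div, Ne, inv_inj]
    exact hβ₂.ne
end
end

section
/- Let n ≥ 4, let u be a unit vector in ℝⁿ, let s be uniformly distributed on the unit sphere S^{n-1} ⊂ ℝⁿ, and let a ∈ (0, 1). Then P[|⟨s, u⟩| > a] ≤ (Γ(n/2)/Γ((n-1)/2)) · √(2/(n-3)) · exp(-(n-3)·a²/2). -/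
open MeasureTheory ProbabilityTheory Filter
open scoped Topology RealInnerProductSpace

noncomputable section

/-- Integration by parts, relating the volume of a spherical sector to the area of its cap. -/
theorem sector_integral_eq (k : ℕ) {a : ℝ} (ha0 : 0 < a) (ha1 : a < 1) :
    a / (k + 4) * √(1 - a ^ 2) ^ (k + 3) + ∫ t in a..1, √(1 - t ^ 2) ^ (k + 3) =
      (k + 3) / (k + 4) * ∫ t in a..1, √(1 - t ^ 2) ^ (k + 1) := by
  have hk : (k : ℝ) + 4 ≠ 0 := by positivity
  have key : ∫ t in a..1, (√(1 - t ^ 2) ^ (k + 3) -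
      (k + 3) / (k + 4) * √(1 - t ^ 2) ^ (k + 1)) =
      1 / (k + 4) * √(1 - 1 ^ 2) ^ (k + 3) - a / (k + 4) * √(1 - a ^ 2) ^ (k + 3) := by
    refine intervalIntegral.integral_eq_sub_of_hasDerivAt_of_le
      (f := fun t : ℝ => t / (k + 4) * √(1 - t ^ 2) ^ (k + 3)) ha1.le
      (by fun_prop) (fun t ht => ?_) (Continuous.intervalIntegrable (by fun_prop) _ _)
    have hpos : 0 < 1 - t ^ 2 := by nlinarith [ht.1, ht.2]
    have hw : 0 < √(1 - t ^ 2) := Real.sqrt_pos.2 hpos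
    have hsq : √(1 - t ^ 2) ^ 2 = 1 - t ^ 2 := Real.sq_sqrt hpos.le
    have h1 : HasDerivAt (fun t : ℝ => 1 - t ^ 2) (-(2 * t)) t := by
      simpa using (hasDerivAt_pow 2 t).const_sub 1
    have h2 := ((h1.sqrt hpos.ne').pow (k + 3))
    have h3 := ((hasDerivAt_id t).div_const ((k : ℝ) + 4)).mul h2
    refine h3.congr_deriv ?_
    simp only [id, Pi.pow_apply]
    generalize √(1 - t ^ 2) = w at *
    push_cast
    field_simp
    have : t ^ 2 = 1 - w ^ 2 := by linarith
    ring_nf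
    rw [this]
    ring
  rw [intervalIntegral.integral_sub (Continuous.intervalIntegrable (by fun_prop) _ _)
    (Continuous.intervalIntegrable (by fun_prop) _ _),
    intervalIntegral.integral_const_mul] at key
  simp only [one_pow, sub_self, Real.sqrt_zero, ne_eq, Nat.add_eq_zero_iff, OfNat.ofNat_ne_zero,
    and_false, not_false_eq_true, zero_pow, mul_zero, zero_sub] at key
  linarith

/-- A Gaussian bound for the tail of the marginal density of the uniform law on the sphere. -/
theorem integral_sqrt_one_sub_sq_pow_le (k : ℕ) {a : ℝ} (ha0 : 0 < a) (ha1 : a < 1) :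
    ∫ t in a..1, √(1 - t ^ 2) ^ (k + 1) ≤
      Real.exp (-(k + 1) * a ^ 2 / 2) * (√(Real.pi / ((k + 1) / 2)) / 2) := by
  have hb : 0 < ((k : ℝ) + 1) / 2 := by positivity
  have hint : IntegrableOn (fun s : ℝ => Real.exp (-(((k : ℝ) + 1) / 2) * s ^ 2)) (Set.Ioi 0) :=
    (integrable_exp_neg_mul_sq hb).integrableOn
  have hpt : ∀ t ∈ Set.Icc a 1, √(1 - t ^ 2) ^ (k + 1) ≤
      Real.exp (-(k + 1) * a ^ 2 / 2) * Real.exp (-(((k : ℝ) + 1) / 2) * (t - a) ^ 2) := by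
    intro t ht
    have h1 : √(1 - t ^ 2) ≤ Real.exp (-(t ^ 2) / 2) := by
      rw [Real.exp_half]
      exact Real.sqrt_le_sqrt (by linarith [Real.add_one_le_exp (-(t ^ 2))])
    calc √(1 - t ^ 2) ^ (k + 1) ≤ Real.exp (-(t ^ 2) / 2) ^ (k + 1) := by gcongr
      _ = Real.exp (-(((k : ℝ) + 1) / 2) * t ^ 2) := by
        rw [← Real.exp_nat_mul]; push_cast; ring_nf
      _ ≤ _ := by
        rw [← Real.exp_add]
        refine Real.exp_le_exp.2 ?_
        have : 0 ≤ a * (t - a) := mul_nonneg ha0.le (by linarith [ht.1])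
        nlinarith
  calc ∫ t in a..1, √(1 - t ^ 2) ^ (k + 1)
      ≤ ∫ t in a..1, Real.exp (-(k + 1) * a ^ 2 / 2) *
          Real.exp (-(((k : ℝ) + 1) / 2) * (t - a) ^ 2) :=
        intervalIntegral.integral_mono_on ha1.le (Continuous.intervalIntegrable (by fun_prop) _ _)
          (Continuous.intervalIntegrable (by fun_prop) _ _) hpt
    _ = Real.exp (-(k + 1) * a ^ 2 / 2) *
          ∫ s in (0 : ℝ)..(1 - a), Real.exp (-(((k : ℝ) + 1) / 2) * s ^ 2) := by
        rw [intervalIntegral.integral_const_mul,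
          intervalIntegral.integral_comp_sub_right
            (fun s => Real.exp (-(((k : ℝ) + 1) / 2) * s ^ 2)), sub_self]
    _ ≤ _ := by
        rw [← integral_gaussian_Ioi, intervalIntegral.integral_of_le (by linarith)]
        refine mul_le_mul_of_nonneg_left ?_ (Real.exp_pos _).le
        exact setIntegral_mono_set hint (ae_of_all _ fun _ => (Real.exp_pos _).le)
          Set.Ioc_subset_Ioi_self.eventuallyLE

theorem exists_linearIsometryEquiv_map_eq {E : Type*} [NormedAddCommGroup E]
    [InnerProductSpace ℝ E] {v w : E} (h : ‖v‖ = ‖w‖) : ∃ T : E ≃ₗᵢ[ℝ] E, T v = w :=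
  ⟨_, Submodule.reflection_sub h⟩

/-- Some isometric splitting `ℝ^(m+1) = ℝ × ℝ^m` takes a given unit vector to `(1, 0)`. -/
theorem exists_linearIsometryEquiv_prod {m : ℕ} {s : EuclideanSpace ℝ (Fin (m + 1))}
    (hs : ‖s‖ = 1) :
    ∃ T : EuclideanSpace ℝ (Fin (m + 1)) ≃ₗᵢ[ℝ] WithLp 2 (ℝ × EuclideanSpace ℝ (Fin m)),
      T s = WithLp.toLp 2 (1, 0) := by
  have hd : Module.finrank ℝ (WithLp 2 (ℝ × EuclideanSpace ℝ (Fin m))) = m + 1 := by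
    rw [(WithLp.linearEquiv 2 ℝ (ℝ × EuclideanSpace ℝ (Fin m))).finrank_eq]
    simp [add_comm]
  let b := (stdOrthonormalBasis ℝ (WithLp 2 (ℝ × EuclideanSpace ℝ (Fin m)))).reindex
    (finCongr hd)
  obtain ⟨R, hR⟩ := exists_linearIsometryEquiv_map_eq
    (v := b.repr.symm s) (w := WithLp.toLp 2 ((1 : ℝ), (0 : EuclideanSpace ℝ (Fin m))))
    (by simp [hs])
  exact ⟨b.repr.symm.trans R, hR⟩

/-- The radius of the slice at height `t` of the spherical sector `a ‖x‖ < |x₀|` in the unit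
ball. -/
def sectorRadius (a t : ℝ) : ℝ := if t ≤ a then √(1 - a ^ 2) / a * t else √(1 - t ^ 2)

theorem lt_sectorRadius {a t r : ℝ} (ha0 : 0 < a) (ha1 : a < 1) (ht : 0 ≤ t)
    (h1 : t ^ 2 + r ^ 2 < 1) (h2 : a ^ 2 * (t ^ 2 + r ^ 2) < t ^ 2) : r < sectorRadius a t := by
  unfold sectorRadius
  split_ifs with h
  · have ha : 0 < 1 - a ^ 2 := sub_pos.2 (pow_lt_one₀ ha0.le ha1 two_ne_zero)
    refine lt_of_pow_lt_pow_left₀ 2 (by positivity) ?_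
    rw [mul_pow, div_pow, Real.sq_sqrt ha.le, div_mul_eq_mul_div, lt_div_iff₀ (by positivity)]
    linarith
  · exact Real.lt_sqrt_of_sq_lt (by linarith)

theorem sectorRadius_nonneg {a t : ℝ} (ha0 : 0 < a) (ht : 0 ≤ t) : 0 ≤ sectorRadius a t := by
  unfold sectorRadius
  split_ifs <;> positivity

theorem measurable_sectorRadius (a : ℝ) : Measurable (sectorRadius a) :=
  Measurable.ite measurableSet_Iic (by fun_prop) (by fun_prop)

theorem lintegral_sectorRadius_pow (k : ℕ) {a : ℝ} (ha0 : 0 < a) (ha1 : a < 1) :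
    ∫⁻ t : ℝ, ENNReal.ofReal (sectorRadius a |t| ^ (k + 3)) =
      ENNReal.ofReal (2 * ((k + 3) / (k + 4) * ∫ t in a..1, √(1 - t ^ 2) ^ (k + 1))) := by
  have hz : ∀ t ∈ Set.Ioi (0 : ℝ) \ Set.Ioc 0 1, sectorRadius a t ^ (k + 3) = 0 := by
    intro t ht
    have h1 : 1 < t := by
      by_contra! h
      exact ht.2 ⟨ht.1, h⟩
    rw [sectorRadius, if_neg (by linarith), Real.sqrt_eq_zero_of_nonpos (by nlinarith)]
    simp
  have e1 : Set.EqOn (fun t => sectorRadius a t ^ (k + 3))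
      (fun t => (√(1 - a ^ 2) / a * t) ^ (k + 3)) (Set.Ioc 0 a) := fun t ht => by
    simp only [sectorRadius, if_pos ht.2]
  have e2 : Set.EqOn (fun t => sectorRadius a t ^ (k + 3))
      (fun t => √(1 - t ^ 2) ^ (k + 3)) (Set.Ioc a 1) := fun t ht => by
    simp only [sectorRadius, if_neg (not_le.2 ht.1)]
  have i1 : IntegrableOn (fun t => sectorRadius a t ^ (k + 3)) (Set.Ioc 0 a) :=
    (integrableOn_congr_fun e1 measurableSet_Ioc).2
      (Continuous.integrableOn_Ioc (by fun_prop))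
  have i2 : IntegrableOn (fun t => sectorRadius a t ^ (k + 3)) (Set.Ioc a 1) :=
    (integrableOn_congr_fun e2 measurableSet_Ioc).2
      (Continuous.integrableOn_Ioc (by fun_prop))
  have i3 : IntegrableOn (fun t => sectorRadius a t ^ (k + 3)) (Set.Ioi 0) := by
    refine IntegrableOn.of_forall_sdiff_eq_zero ?_ measurableSet_Ioi hz
    rw [← Set.Ioc_union_Ioc_eq_Ioc ha0.le ha1.le]
    exact i1.union i2
  have i4 : Integrable (fun t : ℝ => sectorRadius a |t| ^ (k + 3)) := by
    rw [← integrableOn_univ, ← Set.Iic_union_Ioi (a := (0 : ℝ))]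
    refine IntegrableOn.union ?_ (i3.congr_fun (fun t ht => ?_) measurableSet_Ioi)
    · rw [integrableOn_Iic_iff_integrableOn_Iio, ← neg_zero, ← Set.neg_Ioi,
        ← (Measure.measurePreserving_neg volume).integrableOn_comp_preimage
          (MeasurableEquiv.neg ℝ).measurableEmbedding, Set.neg_preimage, neg_neg]
      exact i3.congr_fun (fun t ht => by simp [abs_of_pos ht.out]) measurableSet_Ioi
    · simp [abs_of_pos ht.out]
  rw [← ofReal_integral_eq_lintegral_ofReal i4
    (ae_of_all _ fun t => pow_nonneg (sectorRadius_nonneg ha0 (abs_nonneg t)) _),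
    integral_comp_abs (f := fun t => sectorRadius a t ^ (k + 3)),
    setIntegral_eq_of_subset_of_forall_sdiff_eq_zero measurableSet_Ioi
      Set.Ioc_subset_Ioi_self hz, ← Set.Ioc_union_Ioc_eq_Ioc ha0.le ha1.le,
    setIntegral_union (Set.Ioc_disjoint_Ioc_of_le le_rfl) measurableSet_Ioc i1 i2,
    setIntegral_congr_fun measurableSet_Ioc e1, setIntegral_congr_fun measurableSet_Ioc e2,
    ← intervalIntegral.integral_of_le ha0.le, ← intervalIntegral.integral_of_le ha1.le,
    ← sector_integral_eq k ha0 ha1]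
  congr 3
  simp only [mul_pow, div_pow]
  rw [intervalIntegral.integral_const_mul, integral_pow]
  push_cast
  rw [zero_pow (by omega)]
  field_simp
  ring

theorem volume_sector_le (k : ℕ) {a : ℝ} (ha0 : 0 < a) (ha1 : a < 1)
    {s : EuclideanSpace ℝ (Fin (k + 4))} (hs : ‖s‖ = 1) :
    volume ({x : EuclideanSpace ℝ (Fin (k + 4)) | a * ‖x‖ < |⟪s, x⟫|} ∩ Metric.ball 0 1) ≤
      ENNReal.ofReal (2 * ((k + 3) / (k + 4) * ∫ t in a..1, √(1 - t ^ 2) ^ (k + 1))) *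
        volume (Metric.ball (0 : EuclideanSpace ℝ (Fin (k + 3))) 1) := by
  obtain ⟨T, hT⟩ := exists_linearIsometryEquiv_prod hs
  let A : Set (ℝ × EuclideanSpace ℝ (Fin (k + 3))) :=
    {p | ‖p.2‖ < sectorRadius a |p.1|}
  have hA : MeasurableSet A :=
    measurableSet_lt (by fun_prop)
      ((measurable_sectorRadius a).comp (by fun_prop : Measurable fun
        p : ℝ × EuclideanSpace ℝ (Fin (k + 3)) => |p.1|))
  have hmp := (WithLp.volume_preserving_ofLp ℝ (EuclideanSpace ℝ (Fin (k + 3)))).comp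
    T.measurePreserving
  calc _ ≤ volume ((WithLp.ofLp ∘ T) ⁻¹' A) := by
        refine measure_mono ?_
        rintro x ⟨hx, hx1⟩
        have hinner : ⟪s, x⟫ = (T x).fst := by
          rw [← T.inner_map_map, hT, WithLp.prod_inner_apply]
          simp
        have hnorm : ‖x‖ ^ 2 = |(T x).fst| ^ 2 + ‖(T x).snd‖ ^ 2 := by
          rw [← T.norm_map, WithLp.prod_norm_sq_eq_of_L2, Real.norm_eq_abs]
        rw [Set.mem_ofPred_eq, hinner] at hx
        rw [mem_ball_zero_iff] at hx1
        refine lt_sectorRadius ha0 ha1 (abs_nonneg _) ?_ ?_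
        · change |(T x).fst| ^ 2 + ‖(T x).snd‖ ^ 2 < 1
          rw [← hnorm]
          exact pow_lt_one₀ (norm_nonneg _) hx1 two_ne_zero
        · change a ^ 2 * (|(T x).fst| ^ 2 + ‖(T x).snd‖ ^ 2) < |(T x).fst| ^ 2
          rw [← hnorm, ← mul_pow]
          exact pow_lt_pow_left₀ hx (by positivity) two_ne_zero
    _ = volume A := hmp.measure_preimage hA.nullMeasurableSet
    _ = ∫⁻ t : ℝ, volume (Prod.mk t ⁻¹' A) := Measure.prod_apply hA
    _ = ∫⁻ t : ℝ, ENNReal.ofReal (sectorRadius a |t| ^ (k + 3)) *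
          volume (Metric.ball (0 : EuclideanSpace ℝ (Fin (k + 3))) 1) := by
        refine lintegral_congr fun t => ?_
        have hset : Prod.mk t ⁻¹' A = Metric.ball 0 (sectorRadius a |t|) := by
          ext y
          simp [A]
        rw [hset, Measure.addHaar_ball _ _ (sectorRadius_nonneg ha0 (abs_nonneg t)),
          finrank_euclideanSpace_fin]
    _ = _ := by
        rw [lintegral_mul_const, lintegral_sectorRadius_pow k ha0 ha1]
        exact (((measurable_sectorRadius a).comp measurable_norm).pow_const _).ennreal_ofReal

/-- A rotation-invariant law on the sphere gives caps the mass of the corresponding sectors of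
the unit ball. -/
theorem IsUniformSphere.measure_mul_volume_ball {n : ℕ}
    {μ : Measure (EuclideanSpace ℝ (Fin n))} (hμ : IsUniformSphere n 1 μ)
    {u : EuclideanSpace ℝ (Fin n)} (hu : ‖u‖ = 1) (a : ℝ) :
    μ {s | a < |⟪s, u⟫|} * volume (Metric.ball (0 : EuclideanSpace ℝ (Fin n)) 1) =
      ∫⁻ s, volume ({x | a * ‖x‖ < |⟪s, x⟫|} ∩ Metric.ball 0 1) ∂μ := by
  obtain ⟨hprob, -, hinv⟩ := hμ
  have : Nontrivial (EuclideanSpace ℝ (Fin n)) := ⟨⟨u, 0, fun h => by simp [h] at hu⟩⟩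
  let B : Set (EuclideanSpace ℝ (Fin n) × EuclideanSpace ℝ (Fin n)) :=
    {p | a * ‖p.2‖ < |⟪p.1, p.2⟫|}
  have hB : MeasurableSet B := (isOpen_lt (by fun_prop) (by fun_prop)).measurableSet
  have hcap : ∀ x : EuclideanSpace ℝ (Fin n), x ≠ 0 →
      μ ((fun s => (s, x)) ⁻¹' B) = μ {s | a < |⟪s, u⟫|} := by
    intro x hx
    have hx' : 0 < ‖x‖ := norm_pos_iff.2 hx
    obtain ⟨T, hT⟩ := exists_linearIsometryEquiv_map_eq (v := u) (w := ‖x‖⁻¹ • x)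
      (by rw [hu, norm_smul, norm_inv, norm_norm, inv_mul_cancel₀ hx'.ne'])
    have hxT : x = ‖x‖ • T u := by rw [hT, smul_inv_smul₀ hx'.ne']
    conv_lhs => rw [← hinv T]
    rw [Measure.map_apply T.continuous.measurable (measurable_prodMk_right hB)]
    congr 1
    ext s
    simp only [B, Set.mem_preimage, Set.mem_ofPred_eq]
    have : ⟪T s, x⟫ = ‖x‖ * ⟪s, u⟫ := by
      conv_lhs => rw [hxT]
      rw [inner_smul_right, T.inner_map_map]
    rw [this, abs_mul, abs_norm, mul_comm, mul_lt_mul_iff_right₀ hx']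
  calc _ = ∫⁻ _ in Metric.ball (0 : EuclideanSpace ℝ (Fin n)) 1, μ {s | a < |⟪s, u⟫|} := by
        rw [setLIntegral_const]
    _ = ∫⁻ x in Metric.ball (0 : EuclideanSpace ℝ (Fin n)) 1, μ ((fun s => (s, x)) ⁻¹' B) := by
        refine lintegral_congr_ae (ae_restrict_of_ae ?_)
        filter_upwards [Measure.ae_ne volume (0 : EuclideanSpace ℝ (Fin n))] with x hx
        exact (hcap x hx).symm
    _ = ∫⁻ s, (volume.restrict (Metric.ball (0 : EuclideanSpace ℝ (Fin n)) 1))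
          (Prod.mk s ⁻¹' B) ∂μ := by
        rw [← Measure.prod_apply_symm hB, Measure.prod_apply hB]
    _ = _ := by
        refine lintegral_congr fun s => ?_
        rw [Measure.restrict_apply (measurable_prodMk_left hB)]
        rfl

theorem sector_bound_mul_volume_ball (k : ℕ) (e : ℝ) :
    2 * ((k + 3) / (k + 4) * (e * (√(Real.pi / ((k + 1) / 2)) / 2))) *
        (√Real.pi ^ (k + 3) / Real.Gamma (((k + 3 : ℕ) : ℝ) / 2 + 1)) =
      Real.Gamma (((k + 4 : ℕ) : ℝ) / 2) / Real.Gamma ((((k + 4 : ℕ) : ℝ) - 1) / 2) *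
          √(2 / (((k + 4 : ℕ) : ℝ) - 3)) * e *
        (√Real.pi ^ (k + 4) / Real.Gamma (((k + 4 : ℕ) : ℝ) / 2 + 1)) := by
  have h3 : (0 : ℝ) < ((k + 3 : ℕ) : ℝ) / 2 := by positivity
  have h4 : (0 : ℝ) < ((k + 4 : ℕ) : ℝ) / 2 := by positivity
  have hG3 := (Real.Gamma_pos_of_pos h3).ne'
  have hG4 := (Real.Gamma_pos_of_pos h4).ne'
  rw [Real.Gamma_add_one h3.ne', Real.Gamma_add_one h4.ne',
    show (((k + 4 : ℕ) : ℝ) - 1) / 2 = ((k + 3 : ℕ) : ℝ) / 2 by push_cast; ring,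
    show ((k + 4 : ℕ) : ℝ) - 3 = k + 1 by push_cast; ring,
    show Real.pi / (((k : ℝ) + 1) / 2) = Real.pi * (2 / (k + 1)) by field_simp,
    Real.sqrt_mul Real.pi_pos.le]
  generalize Real.Gamma (((k + 3 : ℕ) : ℝ) / 2) = G3 at *
  generalize Real.Gamma (((k + 4 : ℕ) : ℝ) / 2) = G4 at *
  push_cast
  field_simp
  ring

/-- Tail bound for the projection of a uniform point on the sphere: for `n ≥ 4`, a unit
vector `u ∈ ℝⁿ`, `s` uniform on the unit sphere `S^{n-1}`, and `a ∈ (0,1)`,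
`P[|⟨s, u⟩| > a] ≤ (Γ(n/2)/Γ((n-1)/2)) √(2/(n-3)) exp(-(n-3)a²/2)`. -/
theorem stmt8 (n : ℕ) (hn : 4 ≤ n) (u : EuclideanSpace ℝ (Fin n)) (hu : ‖u‖ = 1)
    (μ : Measure (EuclideanSpace ℝ (Fin n))) (hμ : IsUniformSphere n 1 μ)
    (a : ℝ) (ha : a ∈ Set.Ioo (0 : ℝ) 1) :
    μ {s | a < |⟪s, u⟫|} ≤
      ENNReal.ofReal ((Real.Gamma ((n : ℝ) / 2) / Real.Gamma (((n : ℝ) - 1) / 2)) *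
        Real.sqrt (2 / ((n : ℝ) - 3)) * Real.exp (-((n : ℝ) - 3) * a ^ 2 / 2)) := by
  obtain ⟨k, rfl⟩ : ∃ k, n = k + 4 := ⟨n - 4, by omega⟩
  obtain ⟨ha0, ha1⟩ := ha
  have hprob : IsProbabilityMeasure μ := hμ.1
  have hsphere : ∀ᵐ s ∂μ, ‖s‖ = 1 := by
    filter_upwards [mem_ae_iff.2 hμ.2.1] with s hs
    simpa using hs
  have hball : volume (Metric.ball (0 : EuclideanSpace ℝ (Fin (k + 4))) 1) ≠ 0 :=
    (Metric.measure_ball_pos _ _ one_pos).ne'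
  refine (ENNReal.mul_le_mul_iff_left hball measure_ball_lt_top.ne).1 ?_
  have hG : 0 < Real.Gamma (((k + 4 : ℕ) : ℝ) / 2) := Real.Gamma_pos_of_pos (by positivity)
  have hG' : 0 < Real.Gamma ((((k + 4 : ℕ) : ℝ) - 1) / 2) :=
    Real.Gamma_pos_of_pos (by push_cast; linarith [(Nat.cast_nonneg k : (0 : ℝ) ≤ k)])
  calc _ = ∫⁻ s, volume ({x | a * ‖x‖ < |⟪s, x⟫|} ∩ Metric.ball 0 1) ∂μ :=
        hμ.measure_mul_volume_ball hu a
    _ ≤ ∫⁻ _, ENNReal.ofReal (2 * ((k + 3) / (k + 4) * ∫ t in a..1, √(1 - t ^ 2) ^ (k + 1))) *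
          volume (Metric.ball (0 : EuclideanSpace ℝ (Fin (k + 3))) 1) ∂μ :=
        lintegral_mono_ae (hsphere.mono fun s hs => volume_sector_le k ha0 ha1 hs)
    _ ≤ ENNReal.ofReal (2 * ((k + 3) / (k + 4) *
            (Real.exp (-(k + 1) * a ^ 2 / 2) * (√(Real.pi / ((k + 1) / 2)) / 2)))) *
          volume (Metric.ball (0 : EuclideanSpace ℝ (Fin (k + 3))) 1) := by
        rw [lintegral_const, measure_univ, mul_one]
        gcongr
        exact integral_sqrt_one_sub_sq_pow_le k ha0 ha1
    _ = _ := by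
        simp only [EuclideanSpace.volume_ball, ENNReal.ofReal_one, one_pow, one_mul,
          Fintype.card_fin]
        rw [← ENNReal.ofReal_mul (by positivity), ← ENNReal.ofReal_mul (by positivity),
          sector_bound_mul_volume_ball,
          show -(((k + 4 : ℕ) : ℝ) - 3) = -(k + 1) by push_cast; ring]
end
end

section
/- Let N₁ and N₂ be independent standard normal random variables and let c ∈ [0, 1). Then P[c·|N₁| + √(1 - c²)·N₂ ≥ 0] = 1/2 + (1/π)·arcsin(c). -/
open MeasureTheory ProbabilityTheory

noncomputable section

open Real Set

/-- The standard Gaussian measure on the plane, as a radial density. -/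
lemma gaussianReal_prod_gaussianReal_eq_withDensity :
    (gaussianReal 0 1).prod (gaussianReal 0 1) =
      (volume : Measure (ℝ × ℝ)).withDensity
        (fun p => ENNReal.ofReal ((2 * π)⁻¹ * exp (-(p.1 ^ 2 + p.2 ^ 2) / 2))) := by
  rw [gaussianReal_of_var_ne_zero _ one_ne_zero,
    prod_withDensity (measurable_gaussianPDF 0 1) (measurable_gaussianPDF 0 1)]
  congr 1
  funext p
  rw [gaussianPDF_def, ← ENNReal.ofReal_mul (gaussianPDFReal_nonneg 0 1 _)]
  congr 1
  simp only [gaussianPDFReal_def, NNReal.coe_one, mul_one, sub_zero]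
  rw [mul_mul_mul_comm, ← mul_inv, mul_self_sqrt (by positivity), ← exp_add]
  congr 2
  ring

/-- Up to a constant, the standard Gaussian measure of a cone is its angular measure. -/
lemma gaussianReal_prod_gaussianReal_cone_eq_radial_mul {S : Set (ℝ × ℝ)} (hS : MeasurableSet S)
    (hcone : ∀ r θ : ℝ, 0 < r → ((r * cos θ, r * sin θ) ∈ S ↔ (cos θ, sin θ) ∈ S)) :
    (gaussianReal 0 1).prod (gaussianReal 0 1) S =
      (∫⁻ r in Ioi (0 : ℝ), ENNReal.ofReal r *
        ENNReal.ofReal ((2 * π)⁻¹ * exp (-r ^ 2 / 2))) *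
      volume {θ ∈ Ioo (-π) π | (cos θ, sin θ) ∈ S} := by
  have hT : MeasurableSet {θ : ℝ | (cos θ, sin θ) ∈ S} :=
    (by fun_prop : Measurable fun θ : ℝ => (cos θ, sin θ)) hS
  rw [gaussianReal_prod_gaussianReal_eq_withDensity, withDensity_apply _ hS,
    ← lintegral_indicator hS, ← lintegral_comp_polarCoord_symm, polarCoord_target,
    Measure.volume_eq_prod, ← Measure.prod_restrict]
  have hvol : volume {θ ∈ Ioo (-π) π | (cos θ, sin θ) ∈ S} =
      ∫⁻ θ in Ioo (-π) π, {θ : ℝ | (cos θ, sin θ) ∈ S}.indicator 1 θ := by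
    rw [lintegral_indicator_one hT, Measure.restrict_apply hT, inter_comm]
    rfl
  rw [hvol, ← lintegral_prod_mul (by fun_prop)
    ((measurable_one.indicator hT).aemeasurable), Measure.prod_restrict]
  refine setLIntegral_congr_fun (measurableSet_Ioi.prod measurableSet_Ioo) ?_
  rintro ⟨r, θ⟩ ⟨hr, -⟩
  have hr : 0 < r := hr
  beta_reduce
  rw [polarCoord_symm_apply, smul_eq_mul]
  by_cases h : (cos θ, sin θ) ∈ S
  · have hθ : θ ∈ {θ : ℝ | (cos θ, sin θ) ∈ S} := h
    rw [indicator_of_mem ((hcone r θ hr).2 h), indicator_of_mem hθ,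
      show (r * cos θ) ^ 2 + (r * sin θ) ^ 2 = r ^ 2 by
        linear_combination r ^ 2 * sin_sq_add_cos_sq θ, Pi.one_apply, mul_one]
  · have hθ : θ ∉ {θ : ℝ | (cos θ, sin θ) ∈ S} := h
    rw [indicator_of_notMem (mt (hcone r θ hr).1 h), indicator_of_notMem hθ, mul_zero, mul_zero]

/-- The standard Gaussian measure of a cone is its normalized angular measure. -/
lemma gaussianReal_prod_gaussianReal_cone {S : Set (ℝ × ℝ)} (hS : MeasurableSet S)
    (hcone : ∀ r θ : ℝ, 0 < r → ((r * cos θ, r * sin θ) ∈ S ↔ (cos θ, sin θ) ∈ S)) :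
    (gaussianReal 0 1).prod (gaussianReal 0 1) S =
      volume {θ ∈ Ioo (-π) π | (cos θ, sin θ) ∈ S} / ENNReal.ofReal (2 * π) := by
  have huniv := gaussianReal_prod_gaussianReal_cone_eq_radial_mul MeasurableSet.univ (by simp)
  rw [measure_univ] at huniv
  simp only [mem_univ, and_true, ofPred_mem_eq, volume_Ioo] at huniv
  rw [show π - -π = 2 * π by ring] at huniv
  rw [gaussianReal_prod_gaussianReal_cone_eq_radial_mul hS hcone,
    ENNReal.eq_inv_of_mul_eq_one_left huniv.symm, ENNReal.div_eq_inv_mul]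

/-- The angles of the region `0 ≤ sin a * |x| + cos a * y`. -/
lemma setOf_angle_eq_Ioc_union_Ico {a : ℝ} (ha : 0 ≤ a) (ha' : a < π / 2) :
    {θ ∈ Ioo (-π) π | 0 ≤ sin a * |cos θ| + cos a * sin θ} =
      Ioc (-π) (a - π) ∪ Ico (-a) π := by
  ext θ
  simp only [mem_ofPred_eq, mem_union, mem_Ioo, mem_Ioc, mem_Ico]
  have hsa : 0 ≤ sin a := sin_nonneg_of_nonneg_of_le_pi ha (by linarith)
  have hca : 0 < cos a := cos_pos_of_mem_Ioo ⟨by linarith, ha'⟩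
  rcases le_or_gt 0 θ with h0 | h0
  · constructor
    · rintro ⟨⟨-, h⟩, -⟩
      exact .inr ⟨by linarith, h⟩
    · rintro (h | h)
      · linarith
      · have := sin_nonneg_of_nonneg_of_le_pi h0 h.2.le
        exact ⟨⟨by linarith, h.2⟩, by positivity⟩
  rcases le_or_gt (-(π / 2)) θ with h1 | h1
  · rw [abs_of_nonneg (cos_nonneg_of_mem_Icc ⟨h1, by linarith⟩), ← sin_add]
    constructor
    · rintro ⟨⟨-, h⟩, hs⟩
      refine .inr ⟨?_, h⟩
      by_contra! hlt
      exact absurd (sin_neg_of_neg_of_neg_pi_lt (by linarith : a + θ < 0) (by linarith)) hs.not_gt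
    · rintro (h | h)
      · linarith
      · exact ⟨⟨by linarith, h.2⟩, sin_nonneg_of_nonneg_of_le_pi (by linarith) (by linarith)⟩
  · have key (h : -π < θ) : sin a * |cos θ| + cos a * sin θ = - sin (θ - a + π) := by
      have : cos θ ≤ 0 := by
        rw [← cos_neg]
        exact cos_nonpos_of_pi_div_two_le_of_le (by linarith) (by linarith)
      rw [abs_of_nonpos this, sin_add_pi, sin_sub]
      ring
    constructor
    · rintro ⟨⟨h, -⟩, hs⟩
      rw [key h] at hs
      refine .inl ⟨h, ?_⟩
      by_contra! hlt
      linarith [sin_pos_of_pos_of_lt_pi (by linarith : 0 < θ - a + π) (by linarith)]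
    · rintro (h | h)
      · refine ⟨⟨h.1, by linarith⟩, ?_⟩
        rw [key h.1]
        linarith [sin_nonpos_of_nonpos_of_neg_pi_le (by linarith : θ - a + π ≤ 0) (by linarith)]
      · linarith

/-- If `N₁, N₂` are independent standard normal random variables and `c ∈ [0, 1)`, then
`P[c|N₁| + √(1-c²) N₂ ≥ 0] = 1/2 + (1/π) arcsin c`. The pair `(N₁, N₂)` is modeled by the
product of two standard real Gaussian measures. -/
theorem stmt13 (c : ℝ) (hc : c ∈ Set.Ico (0 : ℝ) 1) :
    ((gaussianReal 0 1).prod (gaussianReal 0 1))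
      {p : ℝ × ℝ | 0 ≤ c * |p.1| + Real.sqrt (1 - c ^ 2) * p.2} =
    ENNReal.ofReal (1 / 2 + (1 / Real.pi) * Real.arcsin c) := by
  rw [gaussianReal_prod_gaussianReal_cone (measurableSet_le (by fun_prop) (by fun_prop))]
  · have ha : 0 ≤ arcsin c := arcsin_nonneg.2 hc.1
    have ha' : arcsin c < π / 2 := arcsin_lt_pi_div_two.2 hc.2
    have hangle := setOf_angle_eq_Ioc_union_Ico ha ha'
    rw [sin_arcsin (by linarith [hc.1]) hc.2.le, cos_arcsin] at hangle
    simp only [mem_ofPred_eq]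
    rw [hangle, measure_union _ measurableSet_Ico, volume_Ioc, volume_Ico,
      ← ENNReal.ofReal_add (by linarith) (by linarith [pi_pos]),
      ← ENNReal.ofReal_div_of_pos (by positivity)]
    · congr 1
      field_simp
      ring
    · rw [Set.disjoint_left]
      rintro θ ⟨-, h⟩ ⟨h', -⟩
      linarith
  · intro r θ hr
    simp only [mem_ofPred_eq]
    rw [abs_mul, abs_of_pos hr,
      show c * (r * |cos θ|) + √(1 - c ^ 2) * (r * sin θ) =
        r * (c * |cos θ| + √(1 - c ^ 2) * sin θ) by ring, mul_nonneg_iff_of_pos_left hr]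
end
end
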